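/- arXiv:2302.09773 — 2 statements merged into one kernel-verified Lean document; each statement's English description precedes it below -/
import Mathlib

section
/- Assume n is even. For every Hopf algebra automorphism ψ of A = A_{Nn}^{μλ} there exist integers s, t with 1 ≤ s ≤ N and 1 ≤ t ≤ n − 1 such that ψ(C_{N1}) = C_{st}, where C_{N1} is the k-linear span of {x11, x12, x21, x22}. -/
/-!
The theorem is a statement about coalgebras. Write `e_{ij} = x_{ij}^{2m} χ_{ij}^t` for
`1 ≤ m ≤ N` and `0 ≤ t ≤ n`. Each of these `2 × 2` families satisfies
`Δ e_{ij} = ∑ e_{il} ⊗ e_{lj}`, and together they span `A`. For `1 ≤ t ≤ n - 1` the entries are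
part of a basis (up to nonzero scalars) and span the block `C_{mt}`; for `t = 0` and `t = n` the
relations `e_{11} = e_{22}` and `e_{21} = ± e_{12}` make the span cocommutative.

Let `d` be any `2 × 2` comatrix with linearly independent entries and span `D`
(`Suzuki.entrySpan_eq_block`). The projection onto `C_{mt}` is the slice `a ↦ ∑ a₁ ε(a₂)`, with `ε`
the counit of that block extended by zero, so it maps `D` into `D ∩ C_{mt}`. If all these
projections kill `d_{12}`, then `d_{12}` lies in the cocommutative part, which contradicts
`Δ d_{12} = d_{11} ⊗ d_{12} + d_{12} ⊗ d_{22}`. Otherwise some `D ∩ C_{mt}` is a nonzero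
subcoalgebra, and since comatrix coalgebras are simple (`entrySpan_le_of_mem`), `D = C_{mt}`.
The image of `C_{N1}` under a coalgebra automorphism is such a `D`.
-/

open scoped TensorProduct

noncomputable section

/-- The alternating product `x i j * x (i+1) (j+1) * x i j * ⋯` with `m` factors,
    i.e. `χ_{ij}^m` for the Suzuki presentation (indices taken in `Fin 2`). -/
def chi {A : Type*} [Ring A] (x : Fin 2 → Fin 2 → A) : Fin 2 → Fin 2 → ℕ → A
  | _, _, 0 => 1
  | i, j, (m + 1) => x i j * chi x (i + 1) (j + 1) (m)

/-- A presentation of the Suzuki Hopf algebra `A_{Nn}^{μλ}` over `k`: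
`x 0 0 = x₁₁`, `x 0 1 = x₁₂`, `x 1 0 = x₂₁`, `x 1 1 = x₂₂`. -/
structure Suzuki (k A : Type*) [Field k] [CharZero k] [IsAlgClosed k]
    [Ring A] [HopfAlgebra k A] where
  N : ℕ
  n : ℕ
  hN : 1 ≤ N
  hn : 2 ≤ n
  μ : k
  lam : k
  hμ : μ = 1 ∨ μ = -1
  hlam : lam = 1 ∨ lam = -1
  x : Fin 2 → Fin 2 → A
  gen : Algebra.adjoin k (Set.range fun p : Fin 2 × Fin 2 => x p.1 p.2) = ⊤
  rel_sq1 : x 0 0 ^ 2 = x 1 1 ^ 2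
  rel_sq2 : x 0 1 ^ 2 = x 1 0 ^ 2
  rel_chi1 : chi x 1 0 n = lam • chi x 0 1 n
  rel_chi2 : chi x 0 0 n = chi x 1 1 n
  rel_mu : x 0 0 ^ (2 * N) + μ • x 0 1 ^ (2 * N) = 1
  rel_odd : ∀ i j i' j' : Fin 2, Odd ((i : ℕ) + j + i' + j') → x i j * x i' j' = 0
  comul_chi : ∀ (i j : Fin 2) (m : ℕ), 1 ≤ m →
    Coalgebra.comul (R := k) (chi x i j m)
      = chi x i 0 m ⊗ₜ[k] chi x 0 j m + chi x i 1 m ⊗ₜ[k] chi x 1 j m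
  counit_x : ∀ i j : Fin 2,
    Coalgebra.counit (R := k) (x i j) = if i = j then (1 : k) else 0
  antipode_x : ∀ i j : Fin 2,
    HopfAlgebra.antipode (R := k) (x i j) = x j i ^ (4 * N - 1)
  basis_indep : LinearIndependent k (fun p : Fin 2 × Fin (2 * N) × Fin n =>
      if p.1 = 0 then x 0 0 ^ ((p.2.1 : ℕ) + 1) * chi x 1 1 (p.2.2 : ℕ)
      else x 0 1 ^ ((p.2.1 : ℕ) + 1) * chi x 1 0 (p.2.2 : ℕ))
  basis_span : Submodule.span k (Set.range fun p : Fin 2 × Fin (2 * N) × Fin n =>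
      if p.1 = 0 then x 0 0 ^ ((p.2.1 : ℕ) + 1) * chi x 1 1 (p.2.2 : ℕ)
      else x 0 1 ^ ((p.2.1 : ℕ) + 1) * chi x 1 0 (p.2.2 : ℕ)) = ⊤

/-- A Hopf algebra automorphism of `A`: a bijective `k`-linear map `A → A` that is
both an algebra homomorphism and a coalgebra homomorphism. -/
def IsHopfAut (k : Type*) {A : Type*} [Field k] [Ring A] [HopfAlgebra k A]
    (ψ : A ≃ₗ[k] A) : Prop :=
  (∀ a b : A, ψ (a * b) = ψ a * ψ b) ∧ ψ 1 = 1 ∧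
  (∀ a : A, Coalgebra.comul (R := k) (ψ a)
      = TensorProduct.map ψ.toLinearMap ψ.toLinearMap (Coalgebra.comul (R := k) a)) ∧
  (∀ a : A, Coalgebra.counit (R := k) (ψ a) = Coalgebra.counit (R := k) a)

/-- The matrix coefficient `x_{ij}^{2m} χ_{ij}^t`. -/
def coef {A : Type*} [Ring A] (x : Fin 2 → Fin 2 → A) (m t : ℕ) (i j : Fin 2) : A :=
  x i j ^ (2 * m) * chi x i j t

/-- A `2 × 2` family satisfies the comultiplication rule of matrix coefficients. -/
def IsComatrix (k : Type*) {A : Type*} [Field k] [Ring A] [HopfAlgebra k A]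
    (e : Fin 2 → Fin 2 → A) : Prop :=
  ∀ i j, Coalgebra.comul (R := k) (e i j) = ∑ l, e i l ⊗ₜ[k] e l j

/-- The functionals `φ p q` are dual to the family `e`. -/
def IsDualTo {k A : Type*} [Field k] [Ring A] [HopfAlgebra k A]
    (φ : Fin 2 → Fin 2 → A →ₗ[k] k) (e : Fin 2 → Fin 2 → A) : Prop :=
  ∀ p q i j, φ p q (e i j) = if i = p ∧ j = q then 1 else 0

/-- The span of the entries of a `2 × 2` family. -/
def entrySpan (k : Type*) {A : Type*} [Field k] [Ring A] [HopfAlgebra k A]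
    (e : Fin 2 → Fin 2 → A) : Submodule k A :=
  Submodule.span k (Set.range fun p : Fin 2 × Fin 2 => e p.1 p.2)

/-! ### Slices and comatrix subcoalgebras -/

section Slices

variable {k A : Type*} [Field k] [Ring A] [HopfAlgebra k A]

/-- The left slice `a ↦ ∑ f(a₁) a₂`. -/
def sliceL (f : A →ₗ[k] k) : A →ₗ[k] A :=
  (TensorProduct.lid k A).toLinearMap ∘ₗ f.rTensor A ∘ₗ Coalgebra.comul (R := k)

/-- The right slice `a ↦ ∑ a₁ f(a₂)`. -/
def sliceR (f : A →ₗ[k] k) : A →ₗ[k] A :=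
  (TensorProduct.rid k A).toLinearMap ∘ₗ f.lTensor A ∘ₗ Coalgebra.comul (R := k)

/-- Stability under all slices; over a field this says that `W` is a subcoalgebra. -/
def SliceStable (W : Submodule k A) : Prop :=
  ∀ f : A →ₗ[k] k, ∀ w ∈ W, sliceL f w ∈ W ∧ sliceR f w ∈ W

theorem sliceL_comatrix {e : Fin 2 → Fin 2 → A} (he : IsComatrix k e) (f : A →ₗ[k] k)
    (i j : Fin 2) : sliceL f (e i j) = ∑ l, f (e i l) • e l j := by
  simp [sliceL, he i j]

theorem sliceR_comatrix {e : Fin 2 → Fin 2 → A} (he : IsComatrix k e) (f : A →ₗ[k] k)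
    (i j : Fin 2) : sliceR f (e i j) = ∑ l, f (e l j) • e i l := by
  simp [sliceR, he i j]

theorem mem_entrySpan (e : Fin 2 → Fin 2 → A) (i j : Fin 2) : e i j ∈ entrySpan k e :=
  Submodule.subset_span ⟨(i, j), rfl⟩

theorem entrySpan_le {e : Fin 2 → Fin 2 → A} {W : Submodule k A} (h : ∀ i j, e i j ∈ W) :
    entrySpan k e ≤ W := by
  refine Submodule.span_le.2 ?_
  rintro _ ⟨p, rfl⟩
  exact h p.1 p.2

theorem sliceStable_entrySpan {e : Fin 2 → Fin 2 → A} (he : IsComatrix k e) :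
    SliceStable (entrySpan k e) := by
  intro f w hw
  have h1 : entrySpan k e ≤ (entrySpan k e).comap (sliceL f) := entrySpan_le fun i j => by
    rw [Submodule.mem_comap, sliceL_comatrix he]
    exact Submodule.sum_mem _ fun l _ => Submodule.smul_mem _ _ (mem_entrySpan e l j)
  have h2 : entrySpan k e ≤ (entrySpan k e).comap (sliceR f) := entrySpan_le fun i j => by
    rw [Submodule.mem_comap, sliceR_comatrix he]
    exact Submodule.sum_mem _ fun l _ => Submodule.smul_mem _ _ (mem_entrySpan e i l)
  exact ⟨h1 hw, h2 hw⟩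

theorem SliceStable.inf {V W : Submodule k A} (hV : SliceStable V) (hW : SliceStable W) :
    SliceStable (V ⊓ W) := fun f w hw =>
  ⟨⟨(hV f w hw.1).1, (hW f w hw.2).1⟩, ⟨(hV f w hw.1).2, (hW f w hw.2).2⟩⟩

theorem exists_coeff {e : Fin 2 → Fin 2 → A} {w : A} (hw : w ∈ entrySpan k e) :
    ∃ c : Fin 2 → Fin 2 → k, w = ∑ i, ∑ j, c i j • e i j := by
  obtain ⟨c, hc⟩ := (Submodule.mem_span_range_iff_exists_fun k).1 hw
  refine ⟨fun i j => c (i, j), ?_⟩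
  rw [← hc, Fintype.sum_prod_type]

/-- A comatrix coalgebra is simple: a slice-stable subspace containing one nonzero
combination of the entries contains every entry. If the coefficient at `(p, q)` is `c ≠ 0`,
slicing by the dual functionals `φ p a` on the left and `φ b q` on the right yields `c • e a b`. -/
theorem entrySpan_le_of_mem {e : Fin 2 → Fin 2 → A} (he : IsComatrix k e)
    {φ : Fin 2 → Fin 2 → A →ₗ[k] k} (hφ : IsDualTo φ e) {W : Submodule k A}
    (hW : SliceStable W) {w : A} (hwe : w ∈ entrySpan k e) (hwW : w ∈ W) (hw : w ≠ 0) :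
    entrySpan k e ≤ W := by
  obtain ⟨c, rfl⟩ := exists_coeff hwe
  obtain ⟨p, q, hpq⟩ : ∃ p q, c p q ≠ 0 := by
    by_contra! h
    exact hw (by simp [h])
  refine entrySpan_le fun a b => ?_
  have h := (hW (φ b q) _ (hW (φ p a) _ hwW).1).2
  have h2 : sliceR (φ b q) (sliceL (φ p a) (∑ i, ∑ j, c i j • e i j)) = c p q • e a b := by
    simp only [map_sum, map_smul, sliceL_comatrix he, sliceR_comatrix he, hφ _ _ _ _]
    fin_cases p <;> fin_cases q <;> fin_cases a <;> fin_cases b <;> simp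
  rw [h2] at h
  exact (Submodule.smul_mem_iff _ hpq).1 h

/-- The failure of cocommutativity, `a ↦ ∑ a₁ ⊗ a₂ - a₂ ⊗ a₁`. -/
def cocomm : A →ₗ[k] A ⊗[k] A :=
  Coalgebra.comul (R := k) -
    (TensorProduct.comm k A A).toLinearMap ∘ₗ Coalgebra.comul (R := k)

theorem cocomm_comatrix_ne_zero {e : Fin 2 → Fin 2 → A} (he : IsComatrix k e)
    {φ : Fin 2 → Fin 2 → A →ₗ[k] k} (hφ : IsDualTo φ e) :
    cocomm (k := k) (e 0 1) ≠ 0 := by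
  intro h
  have h2 := congrArg (LinearMap.mul' k k ∘ₗ TensorProduct.map (φ 0 0) (φ 0 1)) h
  simp [cocomm, he 0 1, hφ _ _ _ _] at h2

end Slices

/-! ### Structure of the Suzuki algebra -/

namespace Suzuki

variable {k A : Type*} [Field k] [CharZero k] [IsAlgClosed k] [Ring A] [HopfAlgebra k A]
  (S : Suzuki k A)

theorem mul_row {i j l : Fin 2} (h : j ≠ l) : S.x i j * S.x i l = 0 := by
  apply S.rel_odd
  revert i j l
  decide

theorem mul_col {i j l : Fin 2} (h : j ≠ l) : S.x j i * S.x l i = 0 := by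
  apply S.rel_odd
  revert i j l
  decide

theorem pow_mul_chi_row {i j l : Fin 2} (h : j ≠ l) (m t : ℕ) (hm : 1 ≤ m) (ht : 1 ≤ t) :
    S.x i j ^ m * chi S.x i l t = 0 := by
  obtain ⟨m, rfl⟩ := Nat.exists_eq_add_of_le' hm
  obtain ⟨t, rfl⟩ := Nat.exists_eq_add_of_le' ht
  rw [chi, pow_succ, mul_assoc, ← mul_assoc (S.x i j), S.mul_row h]
  simp

theorem pow_mul_chi_col {i j l : Fin 2} (h : j ≠ l) (m t : ℕ) (hm : 1 ≤ m) (ht : 1 ≤ t) :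
    S.x j i ^ m * chi S.x l i t = 0 := by
  obtain ⟨m, rfl⟩ := Nat.exists_eq_add_of_le' hm
  obtain ⟨t, rfl⟩ := Nat.exists_eq_add_of_le' ht
  rw [chi, pow_succ, mul_assoc, ← mul_assoc (S.x j i), S.mul_col h]
  simp

theorem comul_x (i j : Fin 2) : Coalgebra.comul (R := k) (S.x i j)
    = S.x i 0 ⊗ₜ[k] S.x 0 j + S.x i 1 ⊗ₜ[k] S.x 1 j := by
  simpa [chi] using S.comul_chi i j 1 le_rfl

theorem comul_pow (i j : Fin 2) (m : ℕ) (hm : 1 ≤ m) :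
    Coalgebra.comul (R := k) (S.x i j ^ m)
      = (S.x i 0 ^ m) ⊗ₜ[k] (S.x 0 j ^ m) + (S.x i 1 ^ m) ⊗ₜ[k] (S.x 1 j ^ m) := by
  induction m, hm using Nat.le_induction with
  | base => simpa using S.comul_x i j
  | succ m hm ih =>
    have h1 : S.x i 0 ^ m * S.x i 1 = 0 := by
      simpa [chi] using S.pow_mul_chi_row (i := i) zero_ne_one m 1 hm le_rfl
    have h2 : S.x i 1 ^ m * S.x i 0 = 0 := by
      simpa [chi] using S.pow_mul_chi_row (i := i) one_ne_zero m 1 hm le_rfl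
    rw [pow_succ, Bialgebra.comul_mul, ih, S.comul_x]
    simp [add_mul, mul_add, h1, h2, pow_succ]

theorem isComatrix_coef (m t : ℕ) (hm : 1 ≤ m) : IsComatrix k (coef S.x m t) := by
  intro i j
  rw [Fin.sum_univ_two]
  unfold coef
  rcases Nat.eq_zero_or_pos t with rfl | ht
  · simpa [chi] using S.comul_pow i j (2 * m) (by omega)
  · rw [Bialgebra.comul_mul, S.comul_pow i j _ (by omega), S.comul_chi i j t ht]
    simp [add_mul, mul_add, S.pow_mul_chi_row zero_ne_one _ t (show 1 ≤ 2 * m by omega) ht,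
      S.pow_mul_chi_row one_ne_zero _ t (show 1 ≤ 2 * m by omega) ht]

theorem pow_one_one (m : ℕ) : S.x 1 1 ^ (2 * m) = S.x 0 0 ^ (2 * m) := by
  rw [pow_mul, pow_mul, S.rel_sq1]

theorem pow_one_zero (m : ℕ) : S.x 1 0 ^ (2 * m) = S.x 0 1 ^ (2 * m) := by
  rw [pow_mul, pow_mul, S.rel_sq2]

theorem mu_mul_mu : S.μ * S.μ = 1 := by
  rcases S.hμ with h | h <;> simp [h]

/-- The element `x₁₁^{2N}` is the identity of the diagonal part of the algebra. -/
theorem pow_N_mul_diag (i : Fin 2) : S.x 0 0 ^ (2 * S.N) * S.x i i = S.x i i := by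
  have hN := S.hN
  have h : S.x 0 1 ^ (2 * S.N) * S.x i i = 0 := by
    obtain ⟨r, hr⟩ : ∃ r, 2 * S.N = r + 1 := ⟨2 * S.N - 1, by omega⟩
    rw [hr, pow_succ, mul_assoc, S.rel_odd 0 1 i i (by revert i; decide), mul_zero]
  have := congrArg (· * S.x i i) S.rel_mu
  simpa [add_mul, h] using this

theorem pow_N_mul_anti (i : Fin 2) :
    S.x 0 1 ^ (2 * S.N) * S.x i (i + 1) = S.μ • S.x i (i + 1) := by
  have hN := S.hN
  have h : S.x 0 0 ^ (2 * S.N) * S.x i (i + 1) = 0 := by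
    obtain ⟨r, hr⟩ : ∃ r, 2 * S.N = r + 1 := ⟨2 * S.N - 1, by omega⟩
    rw [hr, pow_succ, mul_assoc, S.rel_odd 0 0 i (i + 1) (by revert i; decide), mul_zero]
  have := congrArg (fun a => S.μ • (a * S.x i (i + 1))) S.rel_mu
  simpa [add_mul, h, smul_smul, S.mu_mul_mu] using this

/-- The given basis, with indices in `ℕ`: `x₁₁^{s+1} χ₂₂^t` for `r = 0` and
`x₁₂^{s+1} χ₂₁^t` for `r = 1`. -/
def bas (r : Fin 2) (s t : ℕ) : A :=
  if r = 0 then S.x 0 0 ^ (s + 1) * chi S.x 1 1 t else S.x 0 1 ^ (s + 1) * chi S.x 1 0 t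

/-- The basis index of the power `2m + 1`, using that `x^{2N+1}` is proportional to `x`. -/
def nxt (m : ℕ) : ℕ := if m < S.N then 2 * m else 0

/-- The scalar by which `x₁₂^{2m+1}` differs from the corresponding basis power. -/
def scal (m : ℕ) : k := if m < S.N then 1 else S.μ

theorem scal_mul_scal (m : ℕ) : S.scal m * S.scal m = 1 := by
  unfold scal
  split_ifs <;> simp [S.mu_mul_mu]

theorem nxt_lt (m : ℕ) : S.nxt m < 2 * S.N := by
  have := S.hN
  unfold nxt
  split_ifs <;> omega

theorem nxt_inj {m m' : ℕ} (hm : 1 ≤ m) (hm' : 1 ≤ m') (h : m ≤ S.N) (h' : m' ≤ S.N) :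
    S.nxt m = S.nxt m' ↔ m = m' := by
  unfold nxt
  split_ifs <;> omega

theorem nxt_ne {m m' : ℕ} (hm' : 1 ≤ m') : S.nxt m ≠ 2 * m' - 1 := by
  unfold nxt
  split_ifs <;> omega

theorem coef_one_one {m : ℕ} (hm : 1 ≤ m) (t : ℕ) :
    coef S.x m t 1 1 = S.bas 0 (2 * m - 1) t := by
  rw [coef, bas, if_pos rfl, S.pow_one_one, Nat.sub_add_cancel (by omega)]

theorem coef_one_zero {m : ℕ} (hm : 1 ≤ m) (t : ℕ) :
    coef S.x m t 1 0 = S.bas 1 (2 * m - 1) t := by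
  rw [coef, bas, if_neg one_ne_zero, S.pow_one_zero, Nat.sub_add_cancel (by omega)]

theorem coef_zero_zero {m : ℕ} (h : m ≤ S.N) (t : ℕ) :
    coef S.x m (t + 1) 0 0 = S.bas 0 (S.nxt m) t := by
  rw [coef, bas, if_pos rfl, chi, nxt, ← mul_assoc]
  split_ifs with h1
  · rw [pow_succ]; rfl
  · obtain rfl : m = S.N := by omega
    rw [S.pow_N_mul_diag, zero_add, pow_one]

theorem coef_zero_one {m : ℕ} (h : m ≤ S.N) (t : ℕ) :
    coef S.x m (t + 1) 0 1 = S.scal m • S.bas 1 (S.nxt m) t := by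
  rw [coef, bas, if_neg one_ne_zero, chi, nxt, scal, ← mul_assoc]
  split_ifs with h1
  · rw [pow_succ, one_smul]; rfl
  · obtain rfl : m = S.N := by omega
    have := S.pow_N_mul_anti 0
    rw [zero_add] at this
    rw [this, zero_add, pow_one, smul_mul_assoc]; rfl

theorem coef_zero_diag (m : ℕ) : coef S.x m 0 0 0 = coef S.x m 0 1 1 := by
  simp [coef, chi, S.pow_one_one]

theorem coef_zero_anti (m : ℕ) : coef S.x m 0 0 1 = coef S.x m 0 1 0 := by
  simp [coef, chi, S.pow_one_zero]

theorem coef_n_diag (m : ℕ) : coef S.x m S.n 1 1 = coef S.x m S.n 0 0 := by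
  simp [coef, S.rel_chi2, S.pow_one_one]

theorem coef_n_anti (m : ℕ) : coef S.x m S.n 1 0 = S.lam • coef S.x m S.n 0 1 := by
  simp [coef, S.rel_chi1, S.pow_one_zero]

theorem exists_coord : ∃ F : Fin 2 → ℕ → ℕ → A →ₗ[k] k,
    ∀ r s t r' s' t', s < 2 * S.N → t < S.n → s' < 2 * S.N → t' < S.n →
      F r s t (S.bas r' s' t') = if r' = r ∧ s' = s ∧ t' = t then 1 else 0 := by
  classical
  let B := Module.Basis.mk S.basis_indep S.basis_span.ge
  have hB : ∀ r s t (hs : s < 2 * S.N) (ht : t < S.n),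
      S.bas r s t = B (r, ⟨s, hs⟩, ⟨t, ht⟩) := fun r s t hs ht => by
    simp [B, bas]
  refine ⟨fun r s t => if h : s < 2 * S.N ∧ t < S.n then
    B.coord (r, ⟨s, h.1⟩, ⟨t, h.2⟩) else 0, ?_⟩
  intro r s t r' s' t' hs ht hs' ht'
  simp only [dif_pos (show s < 2 * S.N ∧ t < S.n from ⟨hs, ht⟩)]
  rw [hB _ _ _ hs' ht', Module.Basis.coord_apply, B.repr_self,
    Finsupp.single_apply]
  simp

/-- Functionals dual to the block `(m, t)`, vanishing on all other blocks, including the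
degenerate ones `t' = 0` and `t' = n`. -/
theorem exists_dual {m t : ℕ} (hm : 1 ≤ m) (hmN : m ≤ S.N) (ht : 1 ≤ t) (htn : t ≤ S.n - 1) :
    ∃ φ : Fin 2 → Fin 2 → A →ₗ[k] k, ∀ p q i j m' t', 1 ≤ m' → m' ≤ S.N → t' ≤ S.n →
      φ p q (coef S.x m' t' i j)
        = if (m' = m ∧ t' = t) ∧ i = p ∧ j = q then 1 else 0 := by
  obtain ⟨F, hF⟩ := S.exists_coord
  have hn := S.hn
  have hx := S.nxt_lt
  obtain ⟨Φ, hΦ⟩ : ∃ Φ : Fin 2 → Fin 2 → A →ₗ[k] k,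
      Φ = ![![F 0 (S.nxt m) (t - 1), S.scal m • F 1 (S.nxt m) (t - 1)],
        ![F 1 (2 * m - 1) t, F 0 (2 * m - 1) t]] := ⟨_, rfl⟩
  refine ⟨Φ, ?_⟩
  -- values on the four kinds of scaled basis elements
  have a1 : ∀ p q m' t', 1 ≤ m' → m' ≤ S.N → t' < S.n →
      Φ p q (coef S.x m' t' 1 1) = if (m' = m ∧ t' = t) ∧ 1 = p ∧ 1 = q then 1 else 0 := by
    intro p q m' t' h1 h2 h3
    have e1 := S.nxt_ne (m := m) h1
    have e2 : 2 * m' - 1 = 2 * m - 1 ↔ m' = m := by omega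
    rw [S.coef_one_one h1]
    fin_cases p <;> fin_cases q <;>
      simp [hΦ, hF _ _ _ _ _ _ (hx m) (show t - 1 < S.n by omega)
          (show 2 * m' - 1 < 2 * S.N by omega) h3,
        hF _ _ _ _ _ _ (show 2 * m - 1 < 2 * S.N by omega) (show t < S.n by omega)
          (show 2 * m' - 1 < 2 * S.N by omega) h3, e1.symm, e2]
  have a2 : ∀ p q m' t', 1 ≤ m' → m' ≤ S.N → t' < S.n →
      Φ p q (coef S.x m' t' 1 0) = if (m' = m ∧ t' = t) ∧ 1 = p ∧ 0 = q then 1 else 0 := by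
    intro p q m' t' h1 h2 h3
    have e1 := S.nxt_ne (m := m) h1
    have e2 : 2 * m' - 1 = 2 * m - 1 ↔ m' = m := by omega
    rw [S.coef_one_zero h1]
    fin_cases p <;> fin_cases q <;>
      simp [hΦ, hF _ _ _ _ _ _ (hx m) (show t - 1 < S.n by omega)
          (show 2 * m' - 1 < 2 * S.N by omega) h3,
        hF _ _ _ _ _ _ (show 2 * m - 1 < 2 * S.N by omega) (show t < S.n by omega)
          (show 2 * m' - 1 < 2 * S.N by omega) h3, e1.symm, e2]
  have a3 : ∀ p q m' t', 1 ≤ m' → m' ≤ S.N → t' < S.n →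
      Φ p q (coef S.x m' (t' + 1) 0 0)
          = if (m' = m ∧ t' + 1 = t) ∧ 0 = p ∧ 0 = q then 1 else 0 := by
    intro p q m' t' h1 h2 h3
    have e1 := S.nxt_ne (m := m') hm
    have e2 := S.nxt_inj h1 hm h2 hmN
    have e3 : t' = t - 1 ↔ t' + 1 = t := by omega
    rw [S.coef_zero_zero h2]
    fin_cases p <;> fin_cases q <;>
      simp [hΦ, hF _ _ _ _ _ _ (hx m) (show t - 1 < S.n by omega) (hx m') h3,
        hF _ _ _ _ _ _ (show 2 * m - 1 < 2 * S.N by omega) (show t < S.n by omega)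
          (hx m') h3, e1, e2, e3]
  have a4 : ∀ p q m' t', 1 ≤ m' → m' ≤ S.N → t' < S.n →
      Φ p q (coef S.x m' (t' + 1) 0 1)
          = if (m' = m ∧ t' + 1 = t) ∧ 0 = p ∧ 1 = q then 1 else 0 := by
    intro p q m' t' h1 h2 h3
    have e1 := S.nxt_ne (m := m') hm
    have e2 := S.nxt_inj h1 hm h2 hmN
    have e3 : t' = t - 1 ↔ t' + 1 = t := by omega
    have e4 := S.scal_mul_scal m
    rw [S.coef_zero_one h2]
    fin_cases p <;> fin_cases q <;>
      simp [hΦ, hF _ _ _ _ _ _ (hx m) (show t - 1 < S.n by omega) (hx m') h3,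
        hF _ _ _ _ _ _ (show 2 * m - 1 < 2 * S.N by omega) (show t < S.n by omega)
          (hx m') h3, e1, e2, e3]
    split_ifs with h
    · rw [h.1, e4]
    · rfl
  intro p q i j m' t' h1 h2 h3
  rcases Nat.eq_zero_or_pos t' with rfl | h4
  · have b : (0 : ℕ) ≠ t := by omega
    fin_cases i <;> fin_cases j
    · simp [S.coef_zero_diag, a1 p q m' 0 h1 h2 (by omega), b]
    · simp [S.coef_zero_anti, a2 p q m' 0 h1 h2 (by omega), b]
    · simp [a2 p q m' 0 h1 h2 (by omega), b]
    · simp [a1 p q m' 0 h1 h2 (by omega), b]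
  obtain ⟨u, rfl⟩ := Nat.exists_eq_add_of_le' h4
  rcases h3.lt_or_eq with h5 | h5
  · fin_cases i <;> fin_cases j
    · exact a3 p q m' u h1 h2 (by omega)
    · exact a4 p q m' u h1 h2 (by omega)
    · exact a2 p q m' (u + 1) h1 h2 h5
    · exact a1 p q m' (u + 1) h1 h2 h5
  · have b : u + 1 ≠ t := by omega
    have b3 := a3 p q m' u h1 h2 (by omega)
    have b4 := a4 p q m' u h1 h2 (by omega)
    have c1 := S.coef_n_diag m'
    have c2 := S.coef_n_anti m'
    rw [← h5] at c1 c2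
    simp only [b, and_false, false_and, if_false] at b3 b4 ⊢
    fin_cases i <;> fin_cases j
    · exact b3
    · exact b4
    · change Φ p q (coef S.x m' (u + 1) 1 0) = _
      rw [c2, map_smul, b4, smul_zero]
    · change Φ p q (coef S.x m' (u + 1) 1 1) = _
      rw [c1, b3]

/-- The blocks `(m, t)` with `0 ≤ t ≤ n` span the algebra. -/
theorem coef_induction {V : Submodule k A}
    (h : ∀ m t i j, 1 ≤ m → m ≤ S.N → t ≤ S.n → coef S.x m t i j ∈ V) (a : A) : a ∈ V := by
  have hb : ∀ r s t, s < 2 * S.N → t < S.n → S.bas r s t ∈ V := by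
    intro r s t hs ht
    have hN := S.hN
    rcases Nat.even_or_odd' s with ⟨u, rfl | rfl⟩
    · -- an even index `2u` is `nxt m` for `m = u`, or for `m = N` if `u = 0`
      obtain ⟨m, hm, hmN, hu⟩ : ∃ m, 1 ≤ m ∧ m ≤ S.N ∧ S.nxt m = 2 * u := by
        rcases Nat.eq_zero_or_pos u with rfl | hu
        · exact ⟨S.N, hN, le_rfl, by simp [nxt]⟩
        · exact ⟨u, hu, by omega, by rw [nxt, if_pos (by omega)]⟩
      rw [← hu]
      fin_cases r
      · have := h m (t + 1) 0 0 hm hmN ht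
        rwa [S.coef_zero_zero hmN] at this
      · have := V.smul_mem (S.scal m) (h m (t + 1) 0 1 hm hmN ht)
        rwa [S.coef_zero_one hmN, smul_smul, S.scal_mul_scal, one_smul] at this
    · have e : 2 * u + 1 = 2 * (u + 1) - 1 := by omega
      rw [e]
      fin_cases r
      · have := h (u + 1) t 1 1 (by omega) (by omega) ht.le
        rwa [S.coef_one_one (by omega)] at this
      · have := h (u + 1) t 1 0 (by omega) (by omega) ht.le
        rwa [S.coef_one_zero (by omega)] at this
  have : (⊤ : Submodule k A) ≤ V := by
    rw [← S.basis_span, Submodule.span_le]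
    rintro _ ⟨p, rfl⟩
    exact hb p.1 p.2.1 p.2.2 p.2.1.2 p.2.2.2
  exact this trivial

theorem cocomm_coef_eq_zero {m t : ℕ} (hm : 1 ≤ m) (ht : t = 0 ∨ t = S.n) (i j : Fin 2) :
    cocomm (k := k) (coef S.x m t i j) = 0 := by
  have hc := S.isComatrix_coef m t hm i j
  rw [Fin.sum_univ_two] at hc
  simp only [cocomm, LinearMap.sub_apply, LinearMap.comp_apply, hc, map_add,
    LinearEquiv.coe_coe, TensorProduct.comm_tmul]
  rcases ht with rfl | rfl
  · fin_cases i <;> fin_cases j <;> simp [S.coef_zero_diag, S.coef_zero_anti] <;> abel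
  · fin_cases i <;> fin_cases j <;>
      simp [S.coef_n_diag, S.coef_n_anti, TensorProduct.smul_tmul] <;> abel

theorem entrySpan_coef (m t : ℕ) : entrySpan k (coef S.x m t) = Submodule.span k
    {S.x 0 0 ^ (2 * m) * chi S.x 0 0 t, S.x 0 1 ^ (2 * m) * chi S.x 0 1 t,
      S.x 0 0 ^ (2 * m) * chi S.x 1 1 t, S.x 0 1 ^ (2 * m) * chi S.x 1 0 t} := by
  rw [← S.pow_one_one, ← S.pow_one_zero]
  apply le_antisymm
  · refine entrySpan_le fun i j => Submodule.subset_span ?_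
    fin_cases i <;> fin_cases j <;> simp [coef, S.pow_one_one, S.pow_one_zero]
  · rw [Submodule.span_le]
    rintro _ (rfl | rfl | rfl | rfl)
    · simpa [coef, S.pow_one_one] using mem_entrySpan (k := k) (coef S.x m t) 0 0
    · simpa [coef, S.pow_one_zero] using mem_entrySpan (k := k) (coef S.x m t) 0 1
    · exact mem_entrySpan (coef S.x m t) 1 1
    · exact mem_entrySpan (coef S.x m t) 1 0

theorem coef_N_one (i j : Fin 2) :
    coef S.x S.N 1 i j = (if i = j then 1 else S.μ) • S.x i j := by
  have h0 := S.pow_N_mul_diag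
  have h1 := S.pow_N_mul_anti
  fin_cases i <;> fin_cases j
  · simpa [coef, chi] using h0 0
  · simpa [coef, chi] using h1 0
  · simpa [coef, chi, S.pow_one_zero] using h1 1
  · simpa [coef, chi, S.pow_one_one] using h0 1

theorem entrySpan_coef_N_one : entrySpan k (coef S.x S.N 1)
    = Submodule.span k {S.x 0 0, S.x 0 1, S.x 1 0, S.x 1 1} := by
  apply le_antisymm
  · refine entrySpan_le fun i j => ?_
    rw [S.coef_N_one]
    refine Submodule.smul_mem _ _ (Submodule.subset_span ?_)
    fin_cases i <;> fin_cases j <;> simp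
  · have h : ∀ i j, S.x i j ∈ entrySpan k (coef S.x S.N 1) := fun i j => by
      have := Submodule.smul_mem _ (if i = j then (1 : k) else S.μ)
        (mem_entrySpan (k := k) (coef S.x S.N 1) i j)
      rw [S.coef_N_one, smul_smul] at this
      split_ifs at this <;> simpa [S.mu_mul_mu] using this
    rw [Submodule.span_le]
    rintro _ (rfl | rfl | rfl | rfl) <;> exact h _ _

/-- Every `2 × 2` comatrix with linearly independent entries spans one of the blocks
`C_{mt}` with `1 ≤ t ≤ n - 1`. -/
theorem entrySpan_eq_block {d : Fin 2 → Fin 2 → A} (hd : IsComatrix k d)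
    {δ : Fin 2 → Fin 2 → A →ₗ[k] k} (hδ : IsDualTo δ d) :
    ∃ m t, 1 ≤ m ∧ m ≤ S.N ∧ 1 ≤ t ∧ t ≤ S.n - 1 ∧
      entrySpan k d = entrySpan k (coef S.x m t) := by
  classical
  have hdual := fun m t hm hmN ht htn => S.exists_dual (m := m) (t := t) hm hmN ht htn
  choose φ hφ using hdual
  -- `P m t` is the projection of the algebra onto the block `(m, t)`
  let ε : ℕ → ℕ → A →ₗ[k] k := fun m t =>
    if h : (1 ≤ m ∧ m ≤ S.N) ∧ 1 ≤ t ∧ t ≤ S.n - 1 then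
      φ m t h.1.1 h.1.2 h.2.1 h.2.2 0 0 + φ m t h.1.1 h.1.2 h.2.1 h.2.2 1 1 else 0
  let P : ℕ → ℕ → A →ₗ[k] A := fun m t => sliceR (ε m t)
  have hP : ∀ m t, 1 ≤ m → m ≤ S.N → 1 ≤ t → t ≤ S.n - 1 →
      ∀ m' t' i j, 1 ≤ m' → m' ≤ S.N → t' ≤ S.n →
      P m t (coef S.x m' t' i j) = if m' = m ∧ t' = t then coef S.x m' t' i j else 0 := by
    intro m t h1 h2 h3 h4 m' t' i j h5 h6 h7
    simp only [P, ε, sliceR_comatrix (S.isComatrix_coef m' t' h5), dif_pos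
      (show (1 ≤ m ∧ m ≤ S.N) ∧ 1 ≤ t ∧ t ≤ S.n - 1 from ⟨⟨h1, h2⟩, h3, h4⟩),
      LinearMap.add_apply, hφ _ _ _ _ _ _ _ _ _ _ _ _ h5 h6 h7]
    by_cases h : m' = m ∧ t' = t
    · fin_cases i <;> fin_cases j <;> simp [h]
    · simp [h]
  have hPmem : ∀ m t, 1 ≤ m → m ≤ S.N → 1 ≤ t → t ≤ S.n - 1 → ∀ a,
      P m t a ∈ entrySpan k (coef S.x m t) := by
    intro m t h1 h2 h3 h4 a
    refine S.coef_induction (V := (entrySpan k (coef S.x m t)).comap (P m t)) ?_ a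
    intro m' t' i j h5 h6 h7
    rw [Submodule.mem_comap, hP m t h1 h2 h3 h4 m' t' i j h5 h6 h7]
    split_ifs with h
    · obtain ⟨rfl, rfl⟩ := h
      exact mem_entrySpan _ i j
    · exact Submodule.zero_mem _
  by_cases hex : ∃ m t, (1 ≤ m ∧ m ≤ S.N ∧ 1 ≤ t ∧ t ≤ S.n - 1) ∧ P m t (d 0 1) ≠ 0
  · obtain ⟨m, t, ⟨h1, h2, h3, h4⟩, hne⟩ := hex
    refine ⟨m, t, h1, h2, h3, h4, ?_⟩
    have hc := S.isComatrix_coef m t h1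
    have hW := (sliceStable_entrySpan hd).inf (sliceStable_entrySpan hc)
    have hw1 : P m t (d 0 1) ∈ entrySpan k d :=
      (sliceStable_entrySpan hd (ε m t) _ (mem_entrySpan d 0 1)).2
    have hw2 := hPmem m t h1 h2 h3 h4 (d 0 1)
    have hdc : IsDualTo (φ m t h1 h2 h3 h4) (coef S.x m t) := fun p q i j => by
      rw [hφ m t h1 h2 h3 h4 p q i j m t h1 h2 (by omega)]
      simp
    exact le_antisymm
      ((entrySpan_le_of_mem hd hδ hW hw1 ⟨hw1, hw2⟩ hne).trans inf_le_right)
      ((entrySpan_le_of_mem hc hdc hW hw2 ⟨hw1, hw2⟩ hne).trans inf_le_left)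
  · exfalso
    push Not at hex
    let I := Finset.Icc 1 S.N ×ˢ Finset.Icc 1 (S.n - 1)
    -- the complement of the `2 × 2` blocks is cocommutative
    have key : ∀ a, cocomm (k := k) (a - ∑ p ∈ I, P p.1 p.2 a) = 0 := by
      intro a
      have := S.coef_induction (V := LinearMap.ker
        (cocomm (k := k) ∘ₗ (LinearMap.id - ∑ p ∈ I, P p.1 p.2))) ?_ a
      · simpa using this
      intro m t i j h1 h2 h3
      have hsum : ∑ p ∈ I, P p.1 p.2 (coef S.x m t i j)
          = ∑ p ∈ I, if (m, t) = p then coef S.x m t i j else 0 := by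
        refine Finset.sum_congr rfl fun p hp => ?_
        simp only [I, Finset.mem_product, Finset.mem_Icc] at hp
        rw [hP p.1 p.2 hp.1.1 hp.1.2 hp.2.1 hp.2.2 m t i j h1 h2 h3]
        simp [Prod.ext_iff]
      rw [LinearMap.mem_ker, LinearMap.comp_apply, LinearMap.sub_apply, LinearMap.sum_apply,
        hsum, Finset.sum_ite_eq, LinearMap.id_apply]
      split_ifs with h
      · simp
      · rw [sub_zero]
        refine S.cocomm_coef_eq_zero h1 ?_ i j
        simp only [I, Finset.mem_product, Finset.mem_Icc] at h
        omega
    have h0 := key (d 0 1)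
    rw [Finset.sum_eq_zero, sub_zero] at h0
    · exact cocomm_comatrix_ne_zero hd hδ h0
    · intro p hp
      simp only [I, Finset.mem_product, Finset.mem_Icc] at hp
      exact hex p.1 p.2 ⟨hp.1.1, hp.1.2, hp.2.1, hp.2.2⟩

end Suzuki

/-- for every Hopf algebra automorphism ψ of A (with n of the given parity),
there are 1 ≤ s ≤ N and 1 ≤ t ≤ n-1 with ψ(C_{N1}) = C_{st}. -/
theorem stmt5 (k A : Type*) [Field k] [CharZero k] [IsAlgClosed k]
    [Ring A] [HopfAlgebra k A] (S : Suzuki k A) (hpar : Even S.n)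
    (ψ : A ≃ₗ[k] A) (hψ : IsHopfAut k ψ) :
    ∃ s t : ℕ, 1 ≤ s ∧ s ≤ S.N ∧ 1 ≤ t ∧ t ≤ S.n - 1 ∧
      Submodule.map ψ.toLinearMap
          (Submodule.span k {S.x 0 0, S.x 0 1, S.x 1 0, S.x 1 1})
        = Submodule.span k
            {S.x 0 0 ^ (2 * s) * chi S.x 0 0 t, S.x 0 1 ^ (2 * s) * chi S.x 0 1 t,
             S.x 0 0 ^ (2 * s) * chi S.x 1 1 t, S.x 0 1 ^ (2 * s) * chi S.x 1 0 t} := by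
  obtain ⟨-, -, hcom, -⟩ := hψ
  have hn := S.hn
  obtain ⟨φ, hφ⟩ := S.exists_dual S.hN le_rfl le_rfl (show 1 ≤ S.n - 1 by omega)
  let d : Fin 2 → Fin 2 → A := fun i j => ψ (coef S.x S.N 1 i j)
  have hd : IsComatrix k d := fun i j => by
    simp only [d, hcom, S.isComatrix_coef S.N 1 S.hN i j, map_sum, TensorProduct.map_tmul]
    rfl
  have hδ : IsDualTo (fun p q => φ p q ∘ₗ ψ.symm.toLinearMap) d := fun p q i j => by
    simp [d, hφ p q i j S.N 1 S.hN le_rfl (by omega)]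
  obtain ⟨s, t, h1, h2, h3, h4, h⟩ := S.entrySpan_eq_block hd hδ
  refine ⟨s, t, h1, h2, h3, h4, ?_⟩
  rw [← S.entrySpan_coef, ← h, ← S.entrySpan_coef_N_one, entrySpan, entrySpan,
    Submodule.map_span, ← Set.range_comp]
  rfl
end
end

section
/- Let 1 ≤ s ≤ N, 1 ≤ t ≤ n − 1 with t even, and set P = x11^{2s}χ11^t, Q = x11^{2s}χ22^t, R = x12^{2s}χ12^t, T = x12^{2s}χ21^t in A = A_{Nn}^{μλ}. For scalars a1, a2, a3, b1, b2, b3 ∈ k put y = a1·P + (1−a1)·Q + a2·R + a3·T and z = b1·P + (1−b1)·Q + b2·R + b3·T; then y² = z² if and only if (a1−b1)(1−a1−b1) = 0, a2·a3 = b2·b3, and moreover a1 = b1, a2² = b2², a3² = b3² when 2t ≠ n, while a2² + λ·a3² = b2² + λ·b3² when 2t = n. Likewise, for scalars d1, d2, d3, e1, e2, e3 ∈ k put u = d1·P − d1·Q + d2·R + d3·T and v = e1·P − e1·Q + e2·R + e3·T; then u² = v² if and only if d1² = e1², d2·d3 = e2·e3, and moreover d2² = e2², d3² = e3² when 2t ≠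 n, while d2² + λ·d3² = e2² + λ·e3² when 2t = n. -/
/-!
Put `a = x₁₁`, `b = x₂₂` (respectively `a = x₁₂`, `b = x₂₁`). Every product of an element of the
first pair with one of the second vanishes, so `y²` is the sum of the square of its `P, Q`-part and
the square of its `R, T`-part, and the two parts can be studied by the same argument.

Since `a² = b²` commutes with `a` and `b` and `t` is even, `P` and `Q` commute, with
`P² = a^{4s} χ₁₁^{2t}`, `Q² = a^{4s} χ₂₂^{2t}`, `PQ = a^{4s+2t}` (`side_mul`). Two reductions bring
these to the given basis: powers of `a` are periodic up to sign with period `2N`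
(`exists_pow_eq_smul`), and an alternating word of length `n + j` equals, up to the sign `λ` and a
factor `a^{2j}`, the other alternating word of length `n - j` (`alt_reflect`). Consequently each of
`P²`, `Q²`, `PQ` is a nonzero multiple of a basis vector. If `2t ≠ n` the three basis vectors are
different (`side_ne`); if `2t = n` then `Q² = λ P²`, and `P²`, `PQ` involve different basis vectors
(`side_eq`). Comparing coefficients gives polynomial identities in the scalars, which are
equivalent to the stated ones.
-/

open scoped TensorProduct

noncomputable section

/-! ### Alternating words in two elements with equal squares -/

/-- The alternating product `a * b * a * ⋯` with `m` factors, for an arbitrary pair `a, b`. -/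
def alt {A : Type*} [Ring A] : A → A → ℕ → A
  | _, _, 0 => 1
  | a, b, (m + 1) => a * alt b a m

section Alternating

variable {k A : Type*} [Field k] [Ring A] [Algebra k A]

theorem chi_eq_alt (x : Fin 2 → Fin 2 → A) (m : ℕ) (i j : Fin 2) :
    chi x i j m = alt (x i j) (x (i + 1) (j + 1)) m := by
  induction m generalizing i j with
  | zero => simp [chi, alt]
  | succ m ih =>
    have h : ∀ i : Fin 2, i + 1 + 1 = i := by decide
    rw [chi, alt, ih, h, h]

theorem alt_two_mul (a b : A) (r : ℕ) : alt a b (2 * r) = (a * b) ^ r := by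
  induction r with
  | zero => simp [alt]
  | succ r ih =>
    rw [show 2 * (r + 1) = 2 * r + 1 + 1 by ring, alt, alt, ih, pow_succ', mul_assoc]

theorem commute_sq {a b : A} (hab : a ^ 2 = b ^ 2) (m : ℕ) : Commute (a ^ (2 * m)) b := by
  rw [pow_mul, hab]
  exact ((Commute.refl b).pow_left 2).pow_left m

theorem commute_alt {a b : A} (hab : a ^ 2 = b ^ 2) (m r : ℕ) :
    Commute (a ^ (2 * m)) (alt a b r) ∧ Commute (a ^ (2 * m)) (alt b a r) := by
  have ha : Commute (a ^ (2 * m)) a := (Commute.refl a).pow_left _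
  have hb := commute_sq hab m
  induction r with
  | zero => exact ⟨Commute.one_right _, Commute.one_right _⟩
  | succ r ih => exact ⟨ha.mul_right ih.2, hb.mul_right ih.1⟩

theorem pow_mul_pow_swap {a b : A} (hab : a ^ 2 = b ^ 2) (r : ℕ) :
    (a * b) ^ r * (b * a) ^ r = a ^ (4 * r) := by
  induction r with
  | zero => simp
  | succ r ih =>
    have h1 : (a * b) * (b * a) = a ^ (2 * 2) := by
      calc (a * b) * (b * a) = a * b ^ 2 * a := by noncomm_ring
        _ = a ^ (2 * 2) := by rw [← hab]; simp only [pow_succ, pow_zero, one_mul, mul_assoc]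

    have h2 : Commute (a ^ (2 * 2)) ((b * a) ^ r) :=
      ((commute_sq hab 2).mul_right ((Commute.refl a).pow_left _)).pow_right r
    calc (a * b) ^ (r + 1) * (b * a) ^ (r + 1)
        = (a * b) ^ r * ((a * b) * (b * a)) * (b * a) ^ r := by
          rw [pow_succ, pow_succ']; simp only [mul_assoc]
      _ = (a * b) ^ r * (b * a) ^ r * a ^ (2 * 2) := by
          rw [h1, mul_assoc, h2.eq, mul_assoc]
      _ = a ^ (4 * (r + 1)) := by rw [ih, ← pow_add]; congr 1

/-- The words of length `2t` and the power of `a` that express `P²`, `Q²`, `PQ` and `QP`. -/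
theorem side_mul {a b : A} (hab : a ^ 2 = b ^ 2) (s : ℕ) {t : ℕ} (ht : Even t) :
    (a ^ (2 * s) * alt a b t) * (a ^ (2 * s) * alt a b t) = a ^ (4 * s) * alt a b (2 * t) ∧
    (a ^ (2 * s) * alt b a t) * (a ^ (2 * s) * alt b a t) = a ^ (4 * s) * alt b a (2 * t) ∧
    (a ^ (2 * s) * alt a b t) * (a ^ (2 * s) * alt b a t) = a ^ (4 * s + 2 * t) ∧
    (a ^ (2 * s) * alt b a t) * (a ^ (2 * s) * alt a b t) = a ^ (4 * s + 2 * t) := by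
  obtain ⟨r, rfl⟩ := ht
  have key : ∀ u v : A, Commute (a ^ (2 * s)) u →
      (a ^ (2 * s) * u) * (a ^ (2 * s) * v) = a ^ (4 * s) * (u * v) := by
    intro u v h
    calc (a ^ (2 * s) * u) * (a ^ (2 * s) * v) = a ^ (2 * s) * (u * a ^ (2 * s)) * v := by
          simp only [mul_assoc]
      _ = a ^ (2 * s) * a ^ (2 * s) * (u * v) := by rw [← h.eq]; simp only [mul_assoc]
      _ = _ := by rw [← pow_add]; congr 2; ring
  obtain ⟨h1, h2⟩ := commute_alt hab s (r + r)
  rw [key _ _ h1, key _ _ h1, key _ _ h2, key _ _ h2, ← two_mul r]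
  simp only [alt_two_mul]
  have h4 : b ^ (4 * r) = a ^ (4 * r) := by
    rw [show 4 * r = 2 * (2 * r) by ring, pow_mul a, hab, ← pow_mul]
  refine ⟨?_, ?_, ?_, ?_⟩
  · rw [← pow_add, two_mul]
  · rw [← pow_add, two_mul]
  · rw [pow_mul_pow_swap hab, ← pow_add]; congr 1; ring
  · rw [pow_mul_pow_swap hab.symm, h4, ← pow_add]; congr 1; ring

theorem swap_rel {a b : A} {l : k} (hl : l = 1 ∨ l = -1) {n : ℕ}
    (h : alt b a n = l • alt a b n) : alt a b n = l • alt b a n := by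
  rw [h, smul_smul]
  rcases hl with rfl | rfl <;> simp

/-- A word longer than `n` folds back: the letters beyond position `n` cancel in pairs against the
end of the word of length `n` after the two alternating words have been exchanged. -/
theorem alt_reflect {l : k} (hl : l = 1 ∨ l = -1) {n : ℕ} (j : ℕ) (hj : j ≤ n) {a b : A}
    (hab : a ^ 2 = b ^ 2) (h : alt b a n = l • alt a b n) :
    alt b a (n + j) = l • (a ^ (2 * j) * alt a b (n - j)) := by
  induction j generalizing a b with
  | zero => simpa using h
  | succ j ih =>
    have e := ih (by omega) hab.symm (swap_rel hl h)
    have hb : Commute (b ^ (2 * j)) b := (Commute.refl b).pow_left _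
    have hp : a ^ (2 * (j + 1)) = b ^ (2 * j) * (b * b) := by
      rw [pow_mul, hab, ← pow_mul, mul_add, pow_add]; simp [pow_two]
    rw [← add_assoc, alt, e, show n - j = (n - (j + 1)) + 1 by omega, alt, mul_smul_comm, hp,
      ← mul_assoc, ← mul_assoc, ← hb.eq]
    simp only [mul_assoc]

theorem exists_pow_eq_smul {a : A} {N : ℕ} (hN : 1 ≤ N) {m : k} (hm : m ≠ 0)
    (h : a ^ (2 * N + 1) = m • a) (e : ℕ) :
    ∃ c : k, c ≠ 0 ∧ ∃ i : Fin (2 * N), a ^ (e + 1) = c • a ^ ((i : ℕ) + 1) := by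
  induction e with
  | zero => exact ⟨1, one_ne_zero, ⟨0, by omega⟩, by simp⟩
  | succ e ih =>
    obtain ⟨c, hc, i, hi⟩ := ih
    by_cases hlt : (i : ℕ) + 1 < 2 * N
    · exact ⟨c, hc, ⟨i + 1, hlt⟩, by rw [pow_succ, hi, smul_mul_assoc, ← pow_succ]⟩
    · refine ⟨c * m, mul_ne_zero hc hm, ⟨0, by omega⟩, ?_⟩
      have hi' : (i : ℕ) + 1 = 2 * N := by omega
      rw [pow_succ, hi, smul_mul_assoc, ← pow_succ, hi', h, smul_smul]
      simp

/-- `v` is a nonzero multiple of `a ^ (i + 1) * alt b a j` for some `i < 2N`; with `j < n`, and for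
either pair of generators, the latter is a vector of the given basis. -/
def IsMon (k : Type*) {A : Type*} [Field k] [Ring A] [Algebra k A] (N : ℕ) (a b v : A)
    (j : ℕ) : Prop :=
  ∃ c : k, c ≠ 0 ∧ ∃ i : Fin (2 * N), v = c • (a ^ ((i : ℕ) + 1) * alt b a j)

theorem IsMon.smul {N : ℕ} {a b v : A} {j : ℕ} (h : IsMon k N a b v j) {l : k} (hl : l ≠ 0) :
    IsMon k N a b (l • v) j := by
  obtain ⟨c, hc, i, rfl⟩ := h
  exact ⟨l * c, mul_ne_zero hl hc, i, by rw [smul_smul]⟩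

theorem isMon_pow {a b : A} {N : ℕ} (hN : 1 ≤ N) {m : k} (hm : m ≠ 0)
    (h : a ^ (2 * N + 1) = m • a) {e : ℕ} (he : 1 ≤ e) (j : ℕ) :
    IsMon k N a b (a ^ e * alt b a j) j := by
  obtain ⟨e, rfl⟩ := Nat.exists_eq_add_of_le' he
  obtain ⟨c, hc, i, hi⟩ := exists_pow_eq_smul hN hm h e
  exact ⟨c, hc, i, by rw [hi, smul_mul_assoc]⟩

theorem isMon_pow' {a b : A} {N : ℕ} (hN : 1 ≤ N) {m : k} (hm : m ≠ 0)
    (h : a ^ (2 * N + 1) = m • a) (e j : ℕ) :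
    IsMon k N a b (a ^ e * alt a b (j + 1)) j := by
  rw [alt, ← mul_assoc, ← pow_succ]
  exact isMon_pow hN hm h (by omega) j

/-- For `2t ≠ n` the elements `P²`, `Q²` (written as words) have word lengths that are
different, nonzero and less than `n`. -/
theorem side_ne {a b : A} (hab : a ^ 2 = b ^ 2) {N : ℕ} (hN : 1 ≤ N) {m l : k} (hm : m ≠ 0)
    (h : a ^ (2 * N + 1) = m • a) (hl : l = 1 ∨ l = -1) {n : ℕ}
    (hr : alt b a n = l • alt a b n) {s t : ℕ} (hs : 1 ≤ s) (ht : 1 ≤ t) (htn : t < n)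
    (hne : 2 * t ≠ n) :
    ∃ j j' : Fin n, (j : ℕ) ≠ 0 ∧ (j' : ℕ) ≠ 0 ∧ j ≠ j' ∧
      IsMon k N a b (a ^ (4 * s) * alt a b (2 * t)) j ∧
      IsMon k N a b (a ^ (4 * s) * alt b a (2 * t)) j' := by
  have hl0 : l ≠ 0 := by rcases hl with rfl | rfl <;> simp
  rcases lt_or_gt_of_ne hne with hlt | hgt
  · refine ⟨⟨2 * t - 1, by omega⟩, ⟨2 * t, hlt⟩, ?_, ?_, ?_, ?_, ?_⟩
    · change 2 * t - 1 ≠ 0; omega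
    · change 2 * t ≠ 0; omega
    · intro e; have := congrArg Fin.val e; simp only at this; omega
    · have := isMon_pow' (b := b) hN hm h (4 * s) (2 * t - 1)
      rwa [show 2 * t - 1 + 1 = 2 * t by omega] at this
    · exact isMon_pow hN hm h (by omega) _
  · refine ⟨⟨2 * n - 2 * t, by omega⟩, ⟨2 * n - 2 * t - 1, by omega⟩, ?_, ?_, ?_, ?_, ?_⟩
    · change 2 * n - 2 * t ≠ 0; omega
    · change 2 * n - 2 * t - 1 ≠ 0; omega
    · intro e; have := congrArg Fin.val e; simp only at this; omega
    · have e := alt_reflect hl (2 * t - n) (by omega) hab.symm (swap_rel hl hr)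
      have hp : b ^ (2 * (2 * t - n)) = a ^ (2 * (2 * t - n)) := by
        rw [pow_mul, ← hab, ← pow_mul]
      rw [show n + (2 * t - n) = 2 * t by omega, show n - (2 * t - n) = 2 * n - 2 * t by omega,
        hp] at e
      rw [e, mul_smul_comm, ← mul_assoc, ← pow_add]
      exact (isMon_pow hN hm h (by omega) _).smul hl0
    · have e := alt_reflect hl (2 * t - n) (by omega) hab hr
      rw [show n + (2 * t - n) = 2 * t by omega,
        show n - (2 * t - n) = (2 * n - 2 * t - 1) + 1 by omega] at e
      rw [e, mul_smul_comm, ← mul_assoc, ← pow_add]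
      exact (isMon_pow' hN hm h _ _).smul hl0

/-- For `2t = n` one has `Q² = λ P²`, and `P²` has nonzero word length less than `n`. -/
theorem side_eq {a b : A} {N : ℕ} (hN : 1 ≤ N) {m l : k} (hm : m ≠ 0)
    (h : a ^ (2 * N + 1) = m • a) {n : ℕ}
    (hr : alt b a n = l • alt a b n) {s t : ℕ} (ht : 1 ≤ t) (hn : 2 * t = n) :
    ∃ j : Fin n, (j : ℕ) ≠ 0 ∧ IsMon k N a b (a ^ (4 * s) * alt a b (2 * t)) j ∧
      a ^ (4 * s) * alt b a (2 * t) = l • (a ^ (4 * s) * alt a b (2 * t)) := by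
  subst hn
  refine ⟨⟨2 * t - 1, by omega⟩, ?_, ?_, ?_⟩
  · change 2 * t - 1 ≠ 0; omega
  · have := isMon_pow' (b := b) hN hm h (4 * s) (2 * t - 1)
    rwa [show 2 * t - 1 + 1 = 2 * t by omega] at this
  · rw [hr, mul_smul_comm]

theorem mul_eq_zero_of_side {a b c d : A} (hab : a ^ 2 = b ^ 2) (hac : a * c = 0) {s : ℕ}
    (hs : 1 ≤ s) {t : ℕ} {p q : A}
    (hp : p = a ^ (2 * s) * alt a b t ∨ p = a ^ (2 * s) * alt b a t)
    (hq : q = c ^ (2 * s) * alt c d t ∨ q = c ^ (2 * s) * alt d c t) : p * q = 0 := by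
  obtain ⟨h1, h2⟩ := commute_alt hab s t
  obtain ⟨e, he⟩ : ∃ e, 2 * s = e + 1 := ⟨2 * s - 1, by omega⟩
  have hp' : ∃ u, p = u * a := by
    rcases hp with rfl | rfl
    · exact ⟨alt a b t * a ^ e, by rw [h1.eq, he, pow_succ, mul_assoc]⟩
    · exact ⟨alt b a t * a ^ e, by rw [h2.eq, he, pow_succ, mul_assoc]⟩
  have hq' : ∃ u, q = c * u := by
    rcases hq with rfl | rfl
    · exact ⟨c ^ e * alt c d t, by rw [he, pow_succ', mul_assoc]⟩
    · exact ⟨c ^ e * alt d c t, by rw [he, pow_succ', mul_assoc]⟩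
  obtain ⟨u, rfl⟩ := hp'
  obtain ⟨v, rfl⟩ := hq'
  rw [mul_assoc, ← mul_assoc a, hac, zero_mul, mul_zero]

theorem sq_expand {P Q R T : A} (h1 : P * R = 0) (h2 : P * T = 0) (h3 : Q * R = 0)
    (h4 : Q * T = 0) (h5 : R * P = 0) (h6 : T * P = 0) (h7 : R * Q = 0) (h8 : T * Q = 0)
    (hPQ : Q * P = P * Q) (hRT : T * R = R * T) (p q r w : k) :
    (p • P + q • Q + r • R + w • T) ^ 2 = p ^ 2 • (P * P) + q ^ 2 • (Q * Q)
      + (2 * (p * q)) • (P * Q) + r ^ 2 • (R * R) + w ^ 2 • (T * T) + (2 * (r * w)) • (R * T) := by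
  simp only [pow_two (_ + _), mul_add, add_mul, smul_mul_assoc, mul_smul_comm, h1, h2, h3, h4, h5, h6, h7, h8, hPQ, hRT, smul_zero, add_zero, zero_add]
  module

/-- Nonzero multiples of distinct members of a linearly independent family are independent. -/
theorem indep_of_smul {ι κ : Type*} [Fintype κ] {b : ι → A} (hb : LinearIndependent k b)
    {v : κ → A} {f : κ → ι} (hf : Function.Injective f) {c : κ → k} (hc : ∀ i, c i ≠ 0)
    (hv : ∀ i, v i = c i • b (f i)) {g : κ → k} (hg : ∑ i, g i • v i = 0) (i : κ) : g i = 0 := by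
  have h := (Fintype.linearIndependent_iff.1 (hb.comp f hf)) (fun i => g i * c i) (by
    rw [← hg]; exact Finset.sum_congr rfl fun i _ => by rw [hv, smul_smul]; rfl) i
  exact (mul_eq_zero.1 h).resolve_right (hc i)

end Alternating

/-! ### Comparison of coefficients in the Suzuki algebra -/

section Coefficients

variable {k A : Type*} [Field k] [CharZero k] [IsAlgClosed k] [Ring A] [HopfAlgebra k A]

/-- `IsMon` for one of the two pairs of generators (`side = 0` for `x₁₁, x₂₂`, `side = 1` for
`x₁₂, x₂₁`), expressed through the given basis. -/
theorem isMon_basis (S : Suzuki k A) {v : A} {j : Fin S.n} (side : Fin 2)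
    (h : IsMon k S.N (S.x 0 side) (S.x 1 (side + 1)) v j) :
    ∃ c : k, c ≠ 0 ∧ ∃ i : Fin (2 * S.N),
      v = c • (fun p : Fin 2 × Fin (2 * S.N) × Fin S.n =>
      if p.1 = 0 then S.x 0 0 ^ ((p.2.1 : ℕ) + 1) * chi S.x 1 1 (p.2.2 : ℕ)
      else S.x 0 1 ^ ((p.2.1 : ℕ) + 1) * chi S.x 1 0 (p.2.2 : ℕ)) (side, i, j) := by
  obtain ⟨c, hc, i, hi⟩ := h
  refine ⟨c, hc, i, ?_⟩
  rw [hi]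
  fin_cases side <;> simp [chi_eq_alt]

/-- Comparison of coefficients for vectors lying on known sides and having known word lengths. -/
theorem coeff_zero (S : Suzuki k A) {κ : Type*} [Fintype κ] (v : κ → A)
    (side : κ → Fin 2) (j : κ → Fin S.n)
    (hinj : Function.Injective fun i => (side i, j i))
    (h : ∀ i, IsMon k S.N (S.x 0 (side i)) (S.x 1 (side i + 1)) (v i) (j i))
    {g : κ → k} (hg : ∑ i, g i • v i = 0) (i : κ) : g i = 0 := by
  choose c hc e he using fun i => isMon_basis S (side i) (h i)
  refine indep_of_smul S.basis_indep (f := fun i => (side i, e i, j i)) ?_ hc he hg i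
  intro p q hpq
  simp only [Prod.mk.injEq] at hpq
  exact hinj (Prod.ext hpq.1 hpq.2.2)

theorem pow_first (S : Suzuki k A) :
    S.x 0 0 ^ (2 * S.N + 1) = (1 : k) • S.x 0 0 := by
  have hN := S.hN
  have h := congrArg (fun u => u * S.x 0 0) S.rel_mu
  have h0 : S.x 0 1 * S.x 0 0 = 0 := S.rel_odd 0 1 0 0 (by decide)
  have h1 : S.x 0 1 ^ (2 * S.N) * S.x 0 0 = 0 := by
    rw [show 2 * S.N = (2 * S.N - 1) + 1 by omega, pow_succ, mul_assoc, h0, mul_zero]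
  simpa [add_mul, h1, ← pow_succ] using h

theorem pow_second (S : Suzuki k A) :
    S.x 0 1 ^ (2 * S.N + 1) = S.μ • S.x 0 1 := by
  have hN := S.hN
  have h := congrArg (fun u => S.μ • (u * S.x 0 1)) S.rel_mu
  have h0 : S.x 0 0 * S.x 0 1 = 0 := S.rel_odd 0 0 0 1 (by decide)
  have h1 : S.x 0 0 ^ (2 * S.N) * S.x 0 1 = 0 := by
    rw [show 2 * S.N = (2 * S.N - 1) + 1 by omega, pow_succ, mul_assoc, h0, mul_zero]
  have h2 : S.μ * S.μ = 1 := by rcases S.hμ with e | e <;> simp [e]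
  simpa [add_mul, h1, ← pow_succ, smul_smul, h2] using h

/-- Equality of squares of two linear combinations of `P, Q, R, T`, as polynomial identities in
the coefficients. -/
theorem sq_eq_iff (S : Suzuki k A) {s t : ℕ} (hs1 : 1 ≤ s) (ht1 : 1 ≤ t)
    (ht2 : t ≤ S.n - 1) (hteven : Even t) {P Q R T : A}
    (hP : P = S.x 0 0 ^ (2 * s) * chi S.x 0 0 t)
    (hQ : Q = S.x 0 0 ^ (2 * s) * chi S.x 1 1 t)
    (hR : R = S.x 0 1 ^ (2 * s) * chi S.x 0 1 t)
    (hT : T = S.x 0 1 ^ (2 * s) * chi S.x 1 0 t) (p q r w p' q' r' w' : k) :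
    (p • P + q • Q + r • R + w • T) ^ 2 = (p' • P + q' • Q + r' • R + w' • T) ^ 2 ↔
      p * q = p' * q' ∧ r * w = r' * w' ∧
      (2 * t ≠ S.n → p ^ 2 = p' ^ 2 ∧ q ^ 2 = q' ^ 2 ∧ r ^ 2 = r' ^ 2 ∧ w ^ 2 = w' ^ 2) ∧
      (2 * t = S.n → p ^ 2 + q ^ 2 = p' ^ 2 + q' ^ 2 ∧
        r ^ 2 + S.lam * w ^ 2 = r' ^ 2 + S.lam * w' ^ 2) := by
  have hn := S.hn
  have hN := S.hN
  have hr1 := S.rel_chi2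
  have hr2 := S.rel_chi1
  have e11 : (1 : Fin 2) + 1 = 0 := rfl
  simp only [chi_eq_alt, zero_add, e11] at hP hQ hR hT hr1 hr2
  have hr1' : alt (S.x 1 1) (S.x 0 0) S.n = (1 : k) • alt (S.x 0 0) (S.x 1 1) S.n := by
    rw [one_smul, hr1]
  have hac : S.x 0 0 * S.x 0 1 = 0 := S.rel_odd 0 0 0 1 (by decide)
  have hca : S.x 0 1 * S.x 0 0 = 0 := S.rel_odd 0 1 0 0 (by decide)
  have hm : S.μ ≠ 0 := by rcases S.hμ with e | e <;> simp [e]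
  obtain ⟨hPP, hQQ, hPQ, hQP⟩ := side_mul S.rel_sq1 s hteven
  obtain ⟨hRR, hTT, hRT, hTR⟩ := side_mul S.rel_sq2 s hteven
  rw [← hP] at hPP hPQ hQP
  rw [← hQ] at hQQ hPQ hQP
  rw [← hR] at hRR hRT hTR
  rw [← hT] at hTT hRT hTR
  have hPQ0 : IsMon k S.N (S.x 0 0) (S.x 1 1) (P * Q) 0 := by
    rw [hPQ]; simpa [alt] using
      isMon_pow (b := S.x 1 1) hN one_ne_zero (pow_first S) (show 1 ≤ 4 * s + 2 * t by omega) 0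
  have hRT0 : IsMon k S.N (S.x 0 1) (S.x 1 0) (R * T) 0 := by
    rw [hRT]; simpa [alt] using
      isMon_pow (b := S.x 1 0) hN hm (pow_second S) (show 1 ≤ 4 * s + 2 * t by omega) 0
  have hx := sq_expand (k := k)
    (mul_eq_zero_of_side S.rel_sq1 hac hs1 (.inl hP) (.inl hR))
    (mul_eq_zero_of_side S.rel_sq1 hac hs1 (.inl hP) (.inr hT))
    (mul_eq_zero_of_side S.rel_sq1 hac hs1 (.inr hQ) (.inl hR))
    (mul_eq_zero_of_side S.rel_sq1 hac hs1 (.inr hQ) (.inr hT))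
    (mul_eq_zero_of_side S.rel_sq2 hca hs1 (.inl hR) (.inl hP))
    (mul_eq_zero_of_side S.rel_sq2 hca hs1 (.inr hT) (.inl hP))
    (mul_eq_zero_of_side S.rel_sq2 hca hs1 (.inl hR) (.inr hQ))
    (mul_eq_zero_of_side S.rel_sq2 hca hs1 (.inr hT) (.inr hQ))
    (hQP.trans hPQ.symm) (hTR.trans hRT.symm)
  rw [hx, hx]
  by_cases h2 : 2 * t = S.n
  · obtain ⟨j, hj, m1, hQ'⟩ := side_eq (s := s) hN one_ne_zero (pow_first S) hr1' ht1 h2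
    obtain ⟨j', hj', m2, hT'⟩ := side_eq (s := s) hN hm (pow_second S) hr2 ht1 h2
    rw [← hPP] at m1
    rw [← hPP, ← hQQ, one_smul] at hQ'
    rw [← hRR] at m2
    rw [← hRR, ← hTT] at hT'
    simp only [h2, ne_eq, not_true_eq_false, false_imp_iff, true_imp_iff, true_and, hQ', hT']
    constructor
    · intro h
      have key := coeff_zero S ![P * P, P * Q, R * R, R * T] ![0, 0, 1, 1]
        ![j, ⟨0, by omega⟩, j', ⟨0, by omega⟩]
        (by
          intro u v
          fin_cases u <;> fin_cases v <;> simp [Fin.ext_iff, hj, hj', hj.symm, hj'.symm])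
        (by intro u; fin_cases u <;> simp [m1, m2, hPQ0, hRT0])
        (g := ![p ^ 2 + q ^ 2 - (p' ^ 2 + q' ^ 2), 2 * (p * q) - 2 * (p' * q'),
          r ^ 2 + S.lam * w ^ 2 - (r' ^ 2 + S.lam * w' ^ 2), 2 * (r * w) - 2 * (r' * w')])
        (by
          rw [← sub_eq_zero] at h
          rw [← h]
          simp only [Fin.sum_univ_succ, Fin.sum_univ_zero]
          simp
          module)
      have k0 := key 0
      have k1 := key 1
      have k2 := key 2
      have k3 := key 3
      simp at k0 k1 k2 k3
      exact ⟨by linear_combination k1 / 2, by linear_combination k3 / 2,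
        by linear_combination k0, by linear_combination k2⟩
    · rintro ⟨h1, h3, h4, h5⟩
      rw [h1, h3]
      have : ∀ p q r w x y : k, p ^ 2 • (P * P) + q ^ 2 • (P * P) + x • (P * Q) + r ^ 2 • (R * R)
          + w ^ 2 • S.lam • (R * R) + y • (R * T) = (p ^ 2 + q ^ 2) • (P * P) + x • (P * Q)
          + (r ^ 2 + S.lam * w ^ 2) • (R * R) + y • (R * T) := by
        intros; module
      rw [this, this, h4, h5]
  · obtain ⟨j1, j2, hj1, hj2, hj, m1, m1'⟩ := side_ne (s := s) S.rel_sq1 hN one_ne_zero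
      (pow_first S) (.inl rfl) hr1' hs1 ht1 (by omega) h2
    obtain ⟨j3, j4, hj3, hj4, hj', m2, m2'⟩ := side_ne (s := s) S.rel_sq2 hN hm
      (pow_second S) S.hlam hr2 hs1 ht1 (by omega) h2
    rw [← hPP] at m1
    rw [← hQQ] at m1'
    rw [← hRR] at m2
    rw [← hTT] at m2'
    simp only [h2, ne_eq, not_false_eq_true, false_imp_iff, true_imp_iff, and_true]
    constructor
    · intro h
      have hjv : (j1 : ℕ) ≠ j2 := fun e => hj (Fin.ext e)
      have hjv' : (j3 : ℕ) ≠ j4 := fun e => hj' (Fin.ext e)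
      have key := coeff_zero S ![P * P, Q * Q, P * Q, R * R, T * T, R * T] ![0, 0, 0, 1, 1, 1]
        ![j1, j2, ⟨0, by omega⟩, j3, j4, ⟨0, by omega⟩]
        (by
          intro u v
          fin_cases u <;> fin_cases v <;>
            simp [Fin.ext_iff, hj1, hj1.symm, hj2, hj2.symm, hj3, hj3.symm, hj4, hj4.symm,
              hjv, hjv.symm, hjv', hjv'.symm])
        (by intro u; fin_cases u <;> simp [m1, m1', m2, m2', hPQ0, hRT0])
        (g := ![p ^ 2 - p' ^ 2, q ^ 2 - q' ^ 2, 2 * (p * q) - 2 * (p' * q'),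
          r ^ 2 - r' ^ 2, w ^ 2 - w' ^ 2, 2 * (r * w) - 2 * (r' * w')])
        (by
          rw [← sub_eq_zero] at h
          rw [← h]
          simp only [Fin.sum_univ_succ, Fin.sum_univ_zero]
          simp
          module)
      have k0 := key 0
      have k1 := key 1
      have k2 := key 2
      have k3 := key 3
      have k4 := key 4
      have k5 := key 5
      simp at k0 k1 k2 k3 k4 k5
      exact ⟨by linear_combination k2 / 2, by linear_combination k5 / 2,
        by linear_combination k0, by linear_combination k1, by linear_combination k3,
        by linear_combination k4⟩
    · rintro ⟨h1, h3, h4, h5, h6, h7⟩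
      rw [h1, h3, h4, h5, h6, h7]

end Coefficients

/-- t even: criteria for `y² = z²` and `u² = v²`. -/
theorem stmt8 (k A : Type*) [Field k] [CharZero k] [IsAlgClosed k]
    [Ring A] [HopfAlgebra k A] (S : Suzuki k A)
    (s t : ℕ) (hs1 : 1 ≤ s) (hs2 : s ≤ S.N) (ht1 : 1 ≤ t) (ht2 : t ≤ S.n - 1)
    (hteven : Even t)
    (P Q R T : A)
    (hP : P = S.x 0 0 ^ (2 * s) * chi S.x 0 0 t)
    (hQ : Q = S.x 0 0 ^ (2 * s) * chi S.x 1 1 t)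
    (hR : R = S.x 0 1 ^ (2 * s) * chi S.x 0 1 t)
    (hT : T = S.x 0 1 ^ (2 * s) * chi S.x 1 0 t)
    (a1 a2 a3 b1 b2 b3 d1 d2 d3 e1 e2 e3 : k) :
    ((a1 • P + (1 - a1) • Q + a2 • R + a3 • T) ^ 2
        = (b1 • P + (1 - b1) • Q + b2 • R + b3 • T) ^ 2
      ↔ (a1 - b1) * (1 - a1 - b1) = 0 ∧ a2 * a3 = b2 * b3 ∧
        (2 * t ≠ S.n → a1 = b1 ∧ a2 ^ 2 = b2 ^ 2 ∧ a3 ^ 2 = b3 ^ 2) ∧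
        (2 * t = S.n → a2 ^ 2 + S.lam * a3 ^ 2 = b2 ^ 2 + S.lam * b3 ^ 2))
    ∧ ((d1 • P - d1 • Q + d2 • R + d3 • T) ^ 2
        = (e1 • P - e1 • Q + e2 • R + e3 • T) ^ 2
      ↔ d1 ^ 2 = e1 ^ 2 ∧ d2 * d3 = e2 * e3 ∧
        (2 * t ≠ S.n → d2 ^ 2 = e2 ^ 2 ∧ d3 ^ 2 = e3 ^ 2) ∧
        (2 * t = S.n → d2 ^ 2 + S.lam * d3 ^ 2 = e2 ^ 2 + S.lam * e3 ^ 2)) := by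
  have key := sq_eq_iff S hs1 ht1 ht2 hteven hP hQ hR hT
  constructor
  · rw [key]
    constructor
    · rintro ⟨h1, h2, h3, h4⟩
      refine ⟨by linear_combination h1, h2, fun h => ?_, fun h => (h4 h).2⟩
      obtain ⟨h5, h6, h7, h8⟩ := h3 h
      -- `a₁ = (a₁² - (1 - a₁)² + 1) / 2`
      exact ⟨by linear_combination (h5 - h6) / 2, h7, h8⟩
    · rintro ⟨h1, h2, h3, h4⟩
      refine ⟨by linear_combination h1, h2, fun h => ?_, fun h => ⟨?_, h4 h⟩⟩
      · obtain ⟨rfl, h6, h7⟩ := h3 h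
        exact ⟨rfl, rfl, h6, h7⟩
      · linear_combination -2 * h1
  · rw [sub_eq_add_neg (d1 • P), sub_eq_add_neg (e1 • P), ← neg_smul, ← neg_smul, key]
    constructor
    · rintro ⟨h1, h2, h3, h4⟩
      exact ⟨by linear_combination -h1, h2, fun h => (h3 h).2.2, fun h => (h4 h).2⟩
    · rintro ⟨h1, h2, h3, h4⟩
      exact ⟨by linear_combination -h1, h2,
        fun h => ⟨h1, by linear_combination h1, h3 h⟩,
        fun h => ⟨by linear_combination 2 * h1, h4 h⟩⟩
end
end
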